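/- (Euclidean Mean Contracts) Let K < 0, let n ≥ 2, and let x_1, …, x_n ∈ ℍ^d_K. Define the Euclidean mean x̄ = (1/n)∑_{i=1}^n x_i and its projection onto the hyperboloid m^Euc = Π_K(x̄) = x̄ / √(K·⟨x̄,x̄⟩_L). Then the radial depth satisfies r(m^Euc) ≤ (1/n)∑_{i=1}^n r(x_i), with equality if and only if all x_i are identical. -/

import Mathlib

/-!
The heart of the matter is the reverse Cauchy–Schwarz inequality on the hyperboloid:
`1 ≤ K⟨x,y⟩_L`, with equality only for `x = y` (`one_le_mul_lorentzInner`,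
`eq_of_mul_lorentzInner_eq_one`). By bilinearity `K⟨x̄,x̄⟩_L` is the average of the numbers
`K⟨xᵢ,xⱼ⟩_L` over all pairs, hence at least `1`, and it equals `1` exactly when every pair is
extremal, that is, when all points coincide. The projection divides the positive time component
of `x̄`, which is the mean depth, by the square root of this average.
-/

noncomputable section

/-- Lorentzian inner product on ℝ^{d+1}: ⟨x,y⟩_L = −x₀y₀ + ∑_{i=1}^d xᵢyᵢ. -/
def lorentzInner {d : ℕ} (x y : Fin (d + 1) → ℝ) : ℝ :=
  (∑ i, x i * y i) - 2 * x 0 * y 0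

/-- Membership in the Lorentz model ℍ^d_K: ⟨x,x⟩_L = 1/K and x₀ > 0. -/
def onHyperboloid {d : ℕ} (K : ℝ) (x : Fin (d + 1) → ℝ) : Prop :=
  lorentzInner x x = 1 / K ∧ 0 < x 0

theorem lorentzInner_eq_succ {d : ℕ} (x y : Fin (d + 1) → ℝ) :
    lorentzInner x y = (∑ i : Fin d, x i.succ * y i.succ) - x 0 * y 0 := by
  unfold lorentzInner
  rw [Fin.sum_univ_succ]
  ring

/-- Quantitative data behind reverse Cauchy–Schwarz, with `c = -1/K` and `s` the spatial inner
product of `x` and `y`. -/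
theorem spatial_bounds {d : ℕ} {K : ℝ} (hK : K < 0) {x y : Fin (d + 1) → ℝ}
    (hx : onHyperboloid K x) (hy : onHyperboloid K y) :
    ∃ c s : ℝ, 0 < c ∧ K * c = -1 ∧ lorentzInner x y = s - x 0 * y 0 ∧
      s ^ 2 ≤ (x 0 ^ 2 - c) * (y 0 ^ 2 - c) ∧ c ≤ x 0 * y 0 ∧
      ∑ i : Fin d, (x i.succ - y i.succ) ^ 2 = x 0 ^ 2 - c + (y 0 ^ 2 - c) - 2 * s := by
  obtain ⟨hx1, hx0⟩ := hx
  obtain ⟨hy1, hy0⟩ := hy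
  rw [lorentzInner_eq_succ] at hx1 hy1
  have hxx : ∑ i : Fin d, x i.succ ^ 2 = x 0 ^ 2 - -(1 / K) := by
    simp only [pow_two]; linarith
  have hyy : ∑ i : Fin d, y i.succ ^ 2 = y 0 ^ 2 - -(1 / K) := by
    simp only [pow_two]; linarith
  have hc : 0 < -(1 / K) := by
    have := one_div_neg.mpr hK
    linarith
  refine ⟨-(1 / K), ∑ i : Fin d, x i.succ * y i.succ, hc, ?_, lorentzInner_eq_succ x y, ?_, ?_, ?_⟩
  · rw [mul_neg, mul_one_div_cancel hK.ne]
  · rw [← hxx, ← hyy]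
    exact Finset.sum_mul_sq_le_sq_mul_sq _ _ _
  · have h1 : -(1 / K) ≤ x 0 ^ 2 := by
      have : 0 ≤ ∑ i : Fin d, x i.succ ^ 2 := Finset.sum_nonneg fun i _ => sq_nonneg _
      linarith
    have h2 : -(1 / K) ≤ y 0 ^ 2 := by
      have : 0 ≤ ∑ i : Fin d, y i.succ ^ 2 := Finset.sum_nonneg fun i _ => sq_nonneg _
      linarith
    refine le_of_sq_le_sq ?_ (mul_pos hx0 hy0).le
    rw [mul_pow, pow_two (-(1 / K))]
    exact mul_le_mul h1 h2 hc.le (sq_nonneg _)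
  · rw [← hxx, ← hyy, Finset.mul_sum, ← Finset.sum_add_distrib, ← Finset.sum_sub_distrib]
    exact Finset.sum_congr rfl fun i _ => by ring

/-- Reverse Cauchy–Schwarz: `(x₀² - c)(y₀² - c) = (x₀y₀ - c)² - c(x₀ - y₀)²`. -/
theorem one_le_mul_lorentzInner {d : ℕ} {K : ℝ} (hK : K < 0) {x y : Fin (d + 1) → ℝ}
    (hx : onHyperboloid K x) (hy : onHyperboloid K y) : 1 ≤ K * lorentzInner x y := by
  obtain ⟨c, s, hc, hKc, hL, hs, hxy, -⟩ := spatial_bounds hK hx hy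
  have h : s ≤ x 0 * y 0 - c := by
    refine le_of_sq_le_sq ?_ (by linarith)
    nlinarith [mul_nonneg hc.le (sq_nonneg (x 0 - y 0))]
  rw [hL]
  nlinarith

/-- The equality case: it forces `c(x₀ - y₀)² ≤ 0`, and then the spatial parts agree as well. -/
theorem eq_of_mul_lorentzInner_eq_one {d : ℕ} {K : ℝ} (hK : K < 0) {x y : Fin (d + 1) → ℝ}
    (hx : onHyperboloid K x) (hy : onHyperboloid K y) (h : K * lorentzInner x y = 1) :
    x = y := by
  obtain ⟨c, s, hc, hKc, hL, hs, -, hd⟩ := spatial_bounds hK hx hy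
  have hse : s = x 0 * y 0 - c := by
    have : K * (s - x 0 * y 0 + c) = 0 := by rw [← hL]; linarith
    rcases mul_eq_zero.mp this with h0 | h0 <;> linarith
  have h0 : x 0 = y 0 := by
    have h1 : c * (x 0 - y 0) ^ 2 ≤ 0 := by rw [hse] at hs; linarith
    have h2 : (x 0 - y 0) ^ 2 ≤ 0 := nonpos_of_mul_nonpos_right h1 hc
    exact sub_eq_zero.mp (pow_eq_zero_iff two_ne_zero |>.mp (le_antisymm h2 (sq_nonneg _)))
  have hz : ∑ i : Fin d, (x i.succ - y i.succ) ^ 2 = 0 := by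
    rw [hd, hse, h0]; ring
  rw [Finset.sum_eq_zero_iff_of_nonneg fun i _ => sq_nonneg _] at hz
  funext i
  refine Fin.cases h0 (fun j => ?_) i
  exact sub_eq_zero.mp (pow_eq_zero_iff two_ne_zero |>.mp (hz j (Finset.mem_univ j)))

theorem lorentzInner_mean {d n : ℕ} (a : ℝ) (x : Fin n → Fin (d + 1) → ℝ) :
    lorentzInner (a • ∑ i, x i) (a • ∑ i, x i) = a ^ 2 * ∑ i, ∑ j, lorentzInner (x i) (x j) := by
  simp only [lorentzInner, Pi.smul_apply, Finset.sum_apply, smul_eq_mul, Finset.sum_sub_distrib]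
  have h1 : ∀ k, (a * ∑ i, x i k) * (a * ∑ i, x i k) = a ^ 2 * ∑ i, ∑ j, x i k * x j k := by
    intro k
    rw [← Finset.sum_mul_sum]; ring
  have h2 : ∑ i, ∑ j, ∑ k, x i k * x j k = ∑ k, ∑ i, ∑ j, x i k * x j k := by
    rw [Finset.sum_comm]
    simp_rw [Finset.sum_comm (s := (Finset.univ : Finset (Fin n)))
      (t := Finset.univ (α := Fin (d + 1)))]
    exact Finset.sum_congr rfl fun k _ => Finset.sum_comm
  have h3 : ∑ i, ∑ j, 2 * x i 0 * x j 0 = 2 * ∑ i, ∑ j, x i 0 * x j 0 := by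
    simp only [Finset.mul_sum, mul_assoc]
  rw [h2, h3, mul_assoc 2, h1 0, Finset.sum_congr rfl fun k _ => h1 k, ← Finset.mul_sum]
  ring

/-- Euclidean Mean Contracts: the radial depth (time component) of the projected
Euclidean mean is at most the mean radial depth, with equality iff all points
are identical. -/
theorem euclidean_mean_contracts {d n : ℕ} {K : ℝ} (hK : K < 0) (hn : 2 ≤ n)
    {x : Fin n → Fin (d + 1) → ℝ} (hx : ∀ i, onHyperboloid K (x i)) :
    ((Real.sqrt (K * lorentzInner ((n : ℝ)⁻¹ • ∑ i, x i) ((n : ℝ)⁻¹ • ∑ i, x i)))⁻¹ •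
        ((n : ℝ)⁻¹ • ∑ i, x i)) 0 ≤ (n : ℝ)⁻¹ * ∑ i, x i 0 ∧
    (((Real.sqrt (K * lorentzInner ((n : ℝ)⁻¹ • ∑ i, x i) ((n : ℝ)⁻¹ • ∑ i, x i)))⁻¹ •
        ((n : ℝ)⁻¹ • ∑ i, x i)) 0 = (n : ℝ)⁻¹ * ∑ i, x i 0 ↔ ∀ i j, x i = x j) := by
  have hn0 : (0 : ℝ) < n := by exact_mod_cast (by omega : 0 < n)
  set T : ℝ := (n : ℝ)⁻¹ * ∑ i, x i 0 with hT
  have hTpos : 0 < T :=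
    mul_pos (inv_pos.mpr hn0)
      (Finset.sum_pos (fun i _ => (hx i).2) ⟨⟨0, by omega⟩, Finset.mem_univ _⟩)
  set Q : ℝ := K * lorentzInner ((n : ℝ)⁻¹ • ∑ i, x i) ((n : ℝ)⁻¹ • ∑ i, x i) with hQ
  -- The excess of `K⟨x̄,x̄⟩_L` over `1` is a positive multiple of a sum of nonnegative terms.
  have hQ1 : Q - 1 = ((n : ℝ)⁻¹) ^ 2 * ∑ i, ∑ j, (K * lorentzInner (x i) (x j) - 1) := by
    rw [hQ, lorentzInner_mean]
    simp only [Finset.sum_sub_distrib, ← Finset.mul_sum, Finset.sum_const, Finset.card_univ,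
      Fintype.card_fin, nsmul_eq_mul, mul_one]
    field_simp
  have hterm : ∀ i j, 0 ≤ K * lorentzInner (x i) (x j) - 1 := fun i j =>
    sub_nonneg.mpr (one_le_mul_lorentzInner hK (hx i) (hx j))
  have hrow : ∀ i, 0 ≤ ∑ j, (K * lorentzInner (x i) (x j) - 1) := fun i =>
    Finset.sum_nonneg fun j _ => hterm i j
  have hQge : 1 ≤ Q := by
    have : 0 ≤ Q - 1 := by
      rw [hQ1]
      exact mul_nonneg (sq_nonneg _) (Finset.sum_nonneg fun i _ => hrow i)
    linarith
  have hQeq : Q = 1 ↔ ∀ i j, x i = x j := by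
    have ha : ((n : ℝ)⁻¹) ^ 2 ≠ 0 := by positivity
    rw [← sub_eq_zero, hQ1, mul_eq_zero, or_iff_right ha,
      Finset.sum_eq_zero_iff_of_nonneg fun i _ => hrow i]
    constructor
    · intro h i j
      have hi := h i (Finset.mem_univ i)
      rw [Finset.sum_eq_zero_iff_of_nonneg fun j _ => hterm i j] at hi
      exact eq_of_mul_lorentzInner_eq_one hK (hx i) (hx j)
        (sub_eq_zero.mp (hi j (Finset.mem_univ j)))
    · intro h i _
      refine Finset.sum_eq_zero fun j _ => ?_
      rw [← h i j, (hx i).1, mul_one_div_cancel hK.ne, sub_self]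
  have hval : ((Real.sqrt Q)⁻¹ • ((n : ℝ)⁻¹ • ∑ i, x i)) 0 = (Real.sqrt Q)⁻¹ * T := by
    simp [hT, Finset.sum_apply]
  have hs : 1 ≤ Real.sqrt Q := Real.one_le_sqrt.mpr hQge
  rw [hval, ← hQeq]
  refine ⟨mul_le_of_le_one_left hTpos.le (inv_le_one_of_one_le₀ hs), ?_⟩
  rw [mul_eq_right₀ hTpos.ne', inv_eq_one, Real.sqrt_eq_one]
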